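/- For the free group F₂ on two generators there is no continuous linear functional m on ℓ∞(F₂)/ℝ satisfying m([h ↦ f(gh)] − [f]) = f(g) − f(e) for all g ∈ F₂ and f ∈ ℓ∞(F₂); that is, the Johnson class is nonzero in H¹(F₂, (ℓ∞(F₂)/ℝ)*). -/

import Mathlib

noncomputable section
open scoped ENNReal

/-- `ℓ∞(G)`: the Banach space of bounded real-valued functions on `G` with the sup norm. -/
abbrev Linf (G : Type*) : Type _ := ↥(lp (fun _ : G => ℝ) ∞)

/-- The left-translation action of `G` on `ℓ∞(G)`: `(g · f)(h) = f (g⁻¹ h)`. -/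
def ltrans {G : Type*} [Group G] (g : G) (f : Linf G) : Linf G :=
  ⟨fun h => f (g⁻¹ * h),
    memℓp_infty ⟨‖f‖, by
      rintro x ⟨h, rfl⟩
      exact lp.norm_apply_le_norm ENNReal.top_ne_zero f (g⁻¹ * h)⟩⟩

/-- The constant function `1` as an element of `ℓ∞(G)`. -/
def lone (G : Type*) : Linf G :=
  ⟨fun _ => 1, memℓp_infty ⟨1, by rintro x ⟨h, rfl⟩; simp⟩⟩

/-- The subspace of constant functions in `ℓ∞(G)` (the span of the constant function `1`). -/
def Consts (G : Type*) : Submodule ℝ (Linf G) := Submodule.span ℝ {lone G}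

/-- Right translation: `(rt g f)(h) = f (g h)`, i.e. the function `h ↦ f (g h)`. -/
def rt {G : Type*} [Group G] (g : G) (f : Linf G) : Linf G :=
  ⟨fun h => f (g * h),
    memℓp_infty ⟨‖f‖, by
      rintro x ⟨h, rfl⟩
      exact lp.norm_apply_le_norm ENNReal.top_ne_zero f (g * h)⟩⟩

/-- The free group on two generators. -/
abbrev F2 : Type := FreeGroup (Fin 2)

/-- The first generator `a` of `F₂`. -/
def genA : F2 := FreeGroup.of 0

/-- The second generator `b` of `F₂`. -/
def genB : F2 := FreeGroup.of 1

/-- The group element of `F₂` corresponding to a letter: `(i, true) ↦ xᵢ`, `(i, false) ↦ xᵢ⁻¹`.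
As `s` ranges over `Fin 2 × Bool`, `el s` ranges over `S = {a, b, a⁻¹, b⁻¹}`. -/
def el (s : Fin 2 × Bool) : F2 := cond s.2 (FreeGroup.of s.1) (FreeGroup.of s.1)⁻¹

/-- The inverse letter: `invL s` is the letter representing `(el s)⁻¹`. -/
def invL (s : Fin 2 × Bool) : Fin 2 × Bool := (s.1, !s.2)

/-- The indicator function of a set as an element of `ℓ∞`. -/
def indL (S : Set F2) : Linf F2 :=
  ⟨S.indicator (fun _ => 1), memℓp_infty ⟨1, by
    rintro x ⟨h, rfl⟩
    by_cases hh : h ∈ S <;> simp [hh]⟩⟩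

/-- The set of reduced words starting with the letter `s`. -/
def startW (s : Fin 2 × Bool) : Set F2 := {h | h.toWord.head? = some s}

theorem indL_apply (S : Set F2) (h : F2) : (indL S) h = S.indicator (fun _ => (1 : ℝ)) h := rfl

theorem rt_apply (g : F2) (f : Linf F2) (h : F2) : (rt g f) h = f (g * h) := rfl

theorem lone_apply (h : F2) : (lone F2) h = 1 := rfl

theorem of_mul_mem_startW (i : Fin 2) (h : F2) :
    FreeGroup.of i * h ∈ startW (i, true) ↔ h ∉ startW (i, false) := by
  have hred : FreeGroup.reduce h.toWord = h.toWord := FreeGroup.reduce_toWord h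
  have hmul : (FreeGroup.of i * h).toWord = FreeGroup.reduce ((i, true) :: h.toWord) := by
    rw [FreeGroup.toWord_mul, FreeGroup.toWord_of]; rfl
  have hR : FreeGroup.IsReduced h.toWord := FreeGroup.isReduced_toWord
  simp only [startW, Set.mem_ofPred_eq, hmul, FreeGroup.reduce.cons, hred]
  cases hw : h.toWord with
  | nil => simp
  | cons c L =>
    obtain ⟨j, d⟩ := c
    rw [hw] at hR
    by_cases hj : i = j
    · subst hj
      cases d
      · cases L with
        | nil => simp
        | cons c' L' =>
          obtain ⟨k, e⟩ := c'
          have := (FreeGroup.isReduced_cons_cons.1 hR).1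
          simp only at this
          simp
          intro hk
          have := this hk.symm
          simp [← this]
      · simp
    · simp [hj, Ne.symm hj]

theorem pow_set (h : F2) :
    (genA * h ∈ {x : F2 | ∃ n : ℕ, x = genA ^ n}) ↔
      (h ∈ {x : F2 | ∃ n : ℕ, x = genA ^ n}) ∨ genA * h = 1 := by
  constructor
  · rintro ⟨n, hn⟩
    cases n with
    | zero => right; simpa using hn
    | succ n => left; exact ⟨n, by rw [pow_succ'] at hn; exact mul_left_cancel hn⟩
  · rintro (⟨n, rfl⟩ | hh)
    · exact ⟨n + 1, by rw [pow_succ']⟩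
    · exact ⟨0, by simpa using hh⟩

theorem pow_disj (h : F2) (hh : h ∈ {x : F2 | ∃ n : ℕ, x = genA ^ n}) : genA * h ≠ 1 := by
  obtain ⟨n, rfl⟩ := hh
  intro h1
  have h2 := congrArg (FreeGroup.lift (fun _ : Fin 2 => Multiplicative.ofAdd (1 : ℤ))) h1
  simp only [genA, map_mul, map_pow, FreeGroup.lift_apply_of, map_one] at h2
  have h3 := congrArg Multiplicative.toAdd h2
  simp at h3
  omega

theorem sum_letters :
    indL (startW (0, true)) + indL (startW (0, false)) + indL (startW (1, true))
      + indL (startW (1, false)) + indL {1} = lone F2 := by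
  ext h
  simp only [lp.coeFn_add, Pi.add_apply, indL_apply, lone_apply, Set.indicator_apply, startW,
    Set.mem_ofPred_eq, Set.mem_singleton_iff, ← FreeGroup.toWord_eq_nil_iff]
  obtain ⟨w, hw⟩ : ∃ w, h.toWord = w := ⟨_, rfl⟩
  cases w with
  | nil => simp [hw]
  | cons c L =>
    obtain ⟨j, d⟩ := c
    fin_cases j <;> cases d <;> simp [hw]

/-- For the free group `F₂` there is no continuous linear functional `m` on `ℓ∞(F₂)/ℝ`
with `m([h ↦ f(gh)] − [f]) = f(g) − f(e)` for all `g, f`; i.e. the Johnson class is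
nonzero in `H¹(F₂, (ℓ∞(F₂)/ℝ)*)`. -/
theorem johnson_class_nonzero_for_freeGroup_two :
    ¬ ∃ m : (Linf F2 ⧸ Consts F2) →L[ℝ] ℝ,
        ∀ (g : F2) (f : Linf F2),
          m (Submodule.Quotient.mk (rt g f) - Submodule.Quotient.mk f) = f g - f 1 := by
  rintro ⟨m, hm⟩
  let M : Linf F2 → ℝ := fun f => f 1 - m (Submodule.Quotient.mk f)
  have hadd : ∀ f f', M (f + f') = M f + M f' := by
    intro f f'
    simp only [M, Submodule.Quotient.mk_add, map_add, lp.coeFn_add, Pi.add_apply]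
    ring
  have hrt : ∀ g f, M (rt g f) = M f := by
    intro g f
    have := hm g f
    rw [map_sub] at this
    simp only [M, rt_apply, mul_one]
    linarith
  have hone : M (lone F2) = 1 := by
    have : (Submodule.Quotient.mk (lone F2) : Linf F2 ⧸ Consts F2) = 0 :=
      (Submodule.Quotient.mk_eq_zero _).2 (Submodule.subset_span rfl)
    simp [M, this, lone_apply]
  have hi : ∀ i : Fin 2, M (indL (startW (i, true))) + M (indL (startW (i, false))) = 1 := by
    intro i
    rw [← hrt (FreeGroup.of i) (indL (startW (i, true))), ← hadd, ← hone]
    congr 1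
    ext h
    simp only [lp.coeFn_add, Pi.add_apply, indL_apply, lone_apply, rt_apply,
      Set.indicator_apply]
    have h1 := of_mul_mem_startW i h
    by_cases hh : h ∈ startW (i, false) <;> simp [hh, h1]
  have hd : M (indL {1}) = 0 := by
    let P : Set F2 := {x : F2 | ∃ n : ℕ, x = genA ^ n}
    have key : rt genA (indL P) = indL P + rt genA (indL {1}) := by
      ext h
      have h1 := pow_set h
      have h2 := pow_disj h
      change (genA * h ∈ P ↔ h ∈ P ∨ genA * h = 1) at h1
      change (h ∈ P → _) at h2
      simp only [lp.coeFn_add, Pi.add_apply, indL_apply, rt_apply,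
        Set.indicator_apply, Set.mem_singleton_iff]
      by_cases hh : h ∈ P
      · simp [hh, h1, h2 hh]
      · by_cases h3 : genA * h = 1
        · have h4 : genA * h ∈ P := h1.2 (Or.inr h3)
          rw [Set.indicator_of_mem h4]
          simp [hh, h3]
        · have h4 : genA * h ∉ P := fun h5 => (h1.1 h5).elim hh h3
          rw [Set.indicator_of_notMem h4]
          simp [hh, h3]
    have := congrArg M key
    rw [hadd, hrt, hrt] at this
    linarith
  have hs := congrArg M sum_letters
  rw [hadd, hadd, hadd, hadd, hone, hd] at hs
  have h0 := hi 0
  have h1 := hi 1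
  linarith
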